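/- arXiv:1304.3956 — 2 statements merged into one kernel-verified Lean document; each statement's English description precedes it below -/
import Mathlib

section
/- Let m ≥ 1 and μ₁,…,μ_m ∈ ℂ, and set f = X₁⋯X_m·(μ₁X₁ + ⋯ + μ_mX_m) ∈ ℂ[X₁,…,X_m]. If f ≠ 0, then there exists an integer k with 1 ≤ k ≤ N(f) such that 𝓛(f^k) ≠ 0; in particular, if 𝓛(f^k) = 0 for all k ≥ 1, then f = 0. -/
open MvPolynomial

/-- The factorial map `𝓛 : ℂ[X₁,…,X_m] → ℂ`, defined on monomials by
`𝓛(X₁^{l₁}⋯X_m^{l_m}) = l₁!⋯l_m!`. -/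
noncomputable def factMap (m : ℕ) (f : MvPolynomial (Fin m) ℂ) : ℂ :=
  ∑ d ∈ f.support, f.coeff d * ∏ i, ((d i).factorial : ℂ)

/-!
Write `P = ∏ᵢ (1 - μᵢX)`, so that `P⁻¹ = ∏ᵢ ∑ₙ μᵢⁿ Xⁿ`. Expanding `f ^ k` by the multinomial theorem
gives `𝓛(f ^ k) = (k!) ^ (m + 1) · [X ^ k] P⁻¹ ^ (k + 1)`, since
`[X ^ l] (1 - μX)⁻¹ ^ (k + 1) = (l + k choose k) μ ^ l`. If some `μᵢ` is nonzero then `P ≠ 1`,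
because `1 - μᵢX` is not a unit, so `P ≡ 1 + c X ^ k` modulo `X ^ (k + 1)` for some `c ≠ 0` and
`1 ≤ k ≤ deg P ≤ N(f)`. Hence `P⁻¹ ^ (k + 1) ≡ 1 - (k + 1) c X ^ k`, whose `k`-th coefficient is
not zero.
-/

open scoped Nat PowerSeries Polynomial

theorem dvd_sub_one_of_mul_eq_one {R : Type*} [CommRing R] {a u v : R} (hu : a ∣ u - 1)
    (huv : u * v = 1) : a ∣ v - 1 := by
  have hv : v - 1 = (u - 1) * -v := by linear_combination huv
  exact hv ▸ hu.mul_right _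

section PowerSeriesCoeff

variable {R : Type*}

theorem coeff_prod_eq_sum_piAntidiag {ι : Type*} [CommSemiring R] [DecidableEq ι] (s : Finset ι)
    (f : ι → R⟦X⟧) (n : ℕ) :
    PowerSeries.coeff n (∏ i ∈ s, f i) =
      ∑ l ∈ s.piAntidiag n, ∏ i ∈ s, PowerSeries.coeff (l i) (f i) := by
  rw [PowerSeries.coeff_prod, Finset.finsuppAntidiag, Finset.sum_map,
    ← Finset.sum_attach (s.piAntidiag n)]
  rfl

theorem coeff_rescale_mk_one_pow [CommRing R] (a : R) (k n : ℕ) :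
    PowerSeries.coeff n (PowerSeries.rescale a (PowerSeries.mk 1) ^ (k + 1)) =
      a ^ n * (n + k).choose k := by
  rw [← map_pow, PowerSeries.mk_one_pow_eq_mk_choose_add, PowerSeries.coeff_rescale,
    PowerSeries.coeff_mk, add_comm]

variable [CommRing R] {f g : R⟦X⟧} {n : ℕ}

theorem coeff_mul_of_X_pow_dvd_sub_one (hn : n ≠ 0) (hf : PowerSeries.X ^ n ∣ f - 1)
    (hg : PowerSeries.X ^ n ∣ g - 1) :
    PowerSeries.coeff n (f * g) = PowerSeries.coeff n f + PowerSeries.coeff n g := by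
  have hdvd : PowerSeries.X ^ (n + n) ∣ (f - 1) * (g - 1) :=
    (pow_add _ n n).dvd.trans (mul_dvd_mul hf hg)
  have hcross : PowerSeries.coeff n ((f - 1) * (g - 1)) = 0 :=
    PowerSeries.X_pow_dvd_iff.mp hdvd n (by omega)
  have hexpand : f * g = f + g - 1 + (f - 1) * (g - 1) := by ring
  rw [hexpand, map_add, hcross, map_sub, map_add, PowerSeries.coeff_one, if_neg hn, sub_zero,
    add_zero]

theorem coeff_pow_of_X_pow_dvd_sub_one (hn : n ≠ 0) (hf : PowerSeries.X ^ n ∣ f - 1) (N : ℕ) :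
    PowerSeries.coeff n (f ^ N) = N • PowerSeries.coeff n f := by
  induction N with
  | zero => rw [pow_zero, PowerSeries.coeff_one, if_neg hn, zero_smul]
  | succ N ih =>
    have hpow : PowerSeries.X ^ n ∣ f ^ N - 1 := hf.trans (sub_one_dvd_pow_sub_one f N)
    rw [pow_succ, coeff_mul_of_X_pow_dvd_sub_one hn hpow hf, ih, succ_nsmul]

theorem coeff_eq_neg_of_mul_eq_one (hn : n ≠ 0) (hf : PowerSeries.X ^ n ∣ f - 1)
    (hfg : f * g = 1) : PowerSeries.coeff n g = -PowerSeries.coeff n f := by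
  have hadd := coeff_mul_of_X_pow_dvd_sub_one hn hf (dvd_sub_one_of_mul_eq_one hf hfg)
  rw [hfg, PowerSeries.coeff_one, if_neg hn] at hadd
  exact (neg_eq_of_add_eq_zero_right hadd.symm).symm

end PowerSeriesCoeff

theorem exists_forall_coeff_inv_pow_ne_zero {R : Type*} [CommRing R] [IsAddTorsionFree R]
    {P : R[X]} (hP₀ : P.coeff 0 = 1) (hP₁ : P ≠ 1) {f : R⟦X⟧} (hf : (P : R⟦X⟧) * f = 1) :
    ∃ k, 1 ≤ k ∧ k ≤ P.natDegree ∧ ∀ N ≠ 0, PowerSeries.coeff k (f ^ N) ≠ 0 := by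
  have hsub : P - 1 ≠ 0 := sub_ne_zero.mpr hP₁
  set k := (P - 1).natTrailingDegree with hk
  have hk₀ : k ≠ 0 := by
    rw [hk, Ne, Polynomial.natTrailingDegree_eq_zero]
    simp [hsub, hP₀]
  have hcoeff : P.coeff k ≠ 0 := by
    have := Polynomial.trailingCoeff_nonzero_iff_nonzero.mpr hsub
    rwa [Polynomial.trailingCoeff, ← hk, Polynomial.coeff_sub, Polynomial.coeff_one, if_neg hk₀,
      sub_zero] at this
  have hdvd : PowerSeries.X ^ k ∣ (P : R⟦X⟧) - 1 := by
    rw [PowerSeries.X_pow_dvd_iff]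
    intro i hi
    simpa [PowerSeries.coeff_one, Polynomial.coeff_one] using
      Polynomial.coeff_eq_zero_of_lt_natTrailingDegree hi
  refine ⟨k, Nat.one_le_iff_ne_zero.mpr hk₀, Polynomial.le_natDegree_of_ne_zero hcoeff,
    fun N hN => ?_⟩
  rw [coeff_pow_of_X_pow_dvd_sub_one hk₀ (dvd_sub_one_of_mul_eq_one hdvd hf),
    coeff_eq_neg_of_mul_eq_one hk₀ hdvd hf, Polynomial.coeff_coe]
  exact (nsmul_eq_zero_iff_right hN).not.mpr (neg_ne_zero.mpr hcoeff)

section ProdOneSub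

variable {σ R : Type*} [Fintype σ] [CommRing R] (μ : σ → R)

/-- The polynomial `∏ᵢ (1 - μᵢX)`, whose inverse power series is `prodGeom μ`. -/
noncomputable def prodOneSub : R[X] := ∏ i, (1 - Polynomial.C (μ i) * Polynomial.X)

/-- The product `∏ᵢ ∑ₙ μᵢⁿ Xⁿ` of geometric power series; its coefficients are the complete
homogeneous symmetric polynomials in the `μᵢ`. -/
noncomputable def prodGeom : R⟦X⟧ := ∏ i, PowerSeries.rescale (μ i) (PowerSeries.mk 1)

theorem coe_prodOneSub_mul_prodGeom : (prodOneSub μ : R⟦X⟧) * prodGeom μ = 1 := by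
  have hfactor (a : R) :
      (1 - PowerSeries.C a * PowerSeries.X) * PowerSeries.rescale a (PowerSeries.mk 1) = 1 := by
    have := congrArg (PowerSeries.rescale a) (PowerSeries.mk_one_mul_one_sub_eq_one R)
    rwa [map_mul, map_sub, map_one, PowerSeries.rescale_X, mul_comm] at this
  have hcoe : (prodOneSub μ : R⟦X⟧) = ∏ i, (1 - PowerSeries.C (μ i) * PowerSeries.X) := by
    rw [prodOneSub, ← Polynomial.coeToPowerSeries.ringHom_apply, map_prod]
    simp
  rw [hcoe, prodGeom, ← Finset.prod_mul_distrib]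
  exact Finset.prod_eq_one fun i _ => hfactor (μ i)

theorem coeff_zero_prodOneSub : (prodOneSub μ).coeff 0 = 1 := by
  simp [prodOneSub, Polynomial.coeff_zero_prod]

theorem natDegree_prodOneSub_le [DecidableEq R] :
    (prodOneSub μ).natDegree ≤ (Finset.univ.filter fun i => μ i ≠ 0).card := by
  rw [prodOneSub, Finset.card_filter]
  refine (Polynomial.natDegree_prod_le Finset.univ _).trans (Finset.sum_le_sum fun i _ => ?_)
  split_ifs with hi
  · compute_degree
  · simp [not_not.mp hi]

theorem prodOneSub_eq_one_iff [IsReduced R] : prodOneSub μ = 1 ↔ μ = 0 := by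
  refine ⟨fun h => funext fun i => ?_, fun h => by simp [h, prodOneSub]⟩
  have hdvd : 1 - Polynomial.C (μ i) * Polynomial.X ∣ prodOneSub μ :=
    Finset.dvd_prod_of_mem (fun i => 1 - Polynomial.C (μ i) * Polynomial.X) (Finset.mem_univ i)
  have hunit := isUnit_of_dvd_one (hdvd.trans h.dvd)
  have hnil := (Polynomial.isUnit_iff_coeff_isUnit_isNilpotent.mp hunit).2 1 one_ne_zero
  simpa [Polynomial.coeff_one] using hnil.eq_zero

end ProdOneSub

/-- The linear functional `𝓛` on `R[Xᵢ : i ∈ σ]` sending each monomial `∏ᵢ Xᵢ ^ lᵢ` to `∏ᵢ lᵢ!`. -/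
noncomputable def factorialFunctional (σ R : Type*) [Fintype σ] [CommSemiring R] :
    MvPolynomial σ R →ₗ[R] R :=
  (basisMonomials σ R).constr R fun d => ∏ i, ((d i)! : R)

theorem multinomial_mul_prod_factorial_add {ι : Type*} (s : Finset ι) (l : ι → ℕ) (k : ℕ) :
    Nat.multinomial s l * ∏ i ∈ s, (l i + k)! =
      (∑ i ∈ s, l i)! * k ! ^ s.card * ∏ i ∈ s, (l i + k).choose k := by
  have hfactorial (i : ι) : (l i + k)! = (l i)! * (k ! * (l i + k).choose k) := by
    rw [← Nat.add_choose_mul_factorial_mul_factorial]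
    ring
  simp only [hfactorial, Finset.prod_mul_distrib, Finset.prod_const, ← Nat.multinomial_spec]
  ring

section FactorialFunctional

variable {σ R : Type*} [Fintype σ]

theorem factorialFunctional_monomial [CommSemiring R] (d : σ →₀ ℕ) (c : R) :
    factorialFunctional σ R (monomial d c) = c * ∏ i, ((d i)! : R) := by
  have hsmul : monomial d c = c • basisMonomials σ R d := by
    simp [smul_monomial]
  rw [hsmul, map_smul, factorialFunctional, Module.Basis.constr_basis, smul_eq_mul]

theorem prod_X_mul_sum_pow [CommSemiring R] [DecidableEq σ] (μ : σ → R) (k : ℕ) :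
    ((∏ i, X i) * ∑ i, C (μ i) * X i : MvPolynomial σ R) ^ k =
      ∑ l ∈ Finset.univ.piAntidiag k,
        monomial (Finsupp.equivFunOnFinite.symm fun i => l i + k)
          (Nat.multinomial Finset.univ l * ∏ i, μ i ^ l i) := by
  rw [mul_pow, Finset.sum_pow_eq_sum_piAntidiag, Finset.mul_sum]
  refine Finset.sum_congr rfl fun l _ => ?_
  rw [monomial_eq, Finsupp.prod_fintype _ _ (fun _ => pow_zero _)]
  simp only [mul_pow, Finset.prod_mul_distrib, Finsupp.equivFunOnFinite_symm_apply_apply, pow_add,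
    Finset.prod_pow, map_mul, map_prod, map_pow, map_natCast]
  ring

theorem factorialFunctional_prod_X_mul_sum_pow [CommRing R] (μ : σ → R) (k : ℕ) :
    factorialFunctional σ R (((∏ i, X i) * ∑ i, C (μ i) * X i) ^ k) =
      k ! ^ (Fintype.card σ + 1) • PowerSeries.coeff k (prodGeom μ ^ (k + 1)) := by
  classical
  rw [prod_X_mul_sum_pow, map_sum, prodGeom, ← Finset.prod_pow, coeff_prod_eq_sum_piAntidiag,
    Finset.smul_sum]
  refine Finset.sum_congr rfl fun l hl => ?_
  have hcast := congrArg (Nat.cast (R := R)) (multinomial_mul_prod_factorial_add Finset.univ l k)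
  rw [(Finset.mem_piAntidiag.mp hl).1, Finset.card_univ] at hcast
  push_cast at hcast
  simp only [factorialFunctional_monomial, Finsupp.equivFunOnFinite_symm_apply_apply,
    coeff_rescale_mk_one_pow, Finset.prod_mul_distrib, nsmul_eq_mul, Nat.cast_pow]
  linear_combination (∏ i, μ i ^ l i) * hcast

theorem card_filter_ne_zero_le_card_support_prod_X_mul_sum [CommSemiring R] [DecidableEq R]
    (μ : σ → R) :
    (Finset.univ.filter fun i => μ i ≠ 0).card ≤
      ((∏ i, X i) * ∑ i, C (μ i) * X i : MvPolynomial σ R).support.card := by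
  classical
  have hprod : (∏ i, X i : MvPolynomial σ R) =
      monomial (Finsupp.equivFunOnFinite.symm fun _ => 1) 1 := by
    rw [monomial_eq, Finsupp.prod_fintype _ _ (fun _ => pow_zero _)]
    simp
  refine Finset.card_le_card_of_injOn
    (fun i => (Finsupp.equivFunOnFinite.symm fun _ => 1) + Finsupp.single i 1)
    (fun i hi => ?_)
    fun i _ j _ hij => (Finsupp.single_left_inj one_ne_zero).mp (add_left_cancel hij)
  have hμ : μ i ≠ 0 := by simpa using hi
  rw [Finset.mem_coe, mem_support_iff, hprod, coeff_monomial_mul, one_mul, coeff_sum]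
  simpa [coeff_C_mul, coeff_X, Finsupp.single_left_inj] using hμ

end FactorialFunctional

theorem stmt_10_general {σ R : Type*} [Fintype σ] [CommRing R] [IsReduced R] [IsAddTorsionFree R]
    (μ : σ → R) (f : MvPolynomial σ R) (hf : f = (∏ i, X i) * ∑ i, C (μ i) * X i) :
    (f ≠ 0 → ∃ k : ℕ, 1 ≤ k ∧ k ≤ f.support.card ∧ factorialFunctional σ R (f ^ k) ≠ 0) ∧
    ((∀ k : ℕ, 1 ≤ k → factorialFunctional σ R (f ^ k) = 0) → f = 0) := by
  classical
  have hexists (hf₀ : f ≠ 0) :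
      ∃ k : ℕ, 1 ≤ k ∧ k ≤ f.support.card ∧ factorialFunctional σ R (f ^ k) ≠ 0 := by
    have hμ : μ ≠ 0 := fun h => hf₀ (by simp [hf, h])
    obtain ⟨k, hk₁, hk, hcoeff⟩ := exists_forall_coeff_inv_pow_ne_zero (coeff_zero_prodOneSub μ)
      ((prodOneSub_eq_one_iff μ).not.mpr hμ) (coe_prodOneSub_mul_prodGeom μ)
    have hsupport := (natDegree_prodOneSub_le μ).trans
      (card_filter_ne_zero_le_card_support_prod_X_mul_sum μ)
    refine ⟨k, hk₁, hf ▸ hk.trans hsupport, ?_⟩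
    rw [hf, factorialFunctional_prod_X_mul_sum_pow]
    exact (nsmul_eq_zero_iff_right (pow_ne_zero _ k.factorial_ne_zero)).not.mpr
      (hcoeff (k + 1) k.succ_ne_zero)
  refine ⟨hexists, fun hzero => by_contra fun hf₀ => ?_⟩
  obtain ⟨k, hk₁, -, hk⟩ := hexists hf₀
  exact hk (hzero k hk₁)

theorem factMap_eq_factorialFunctional (m : ℕ) (f : MvPolynomial (Fin m) ℂ) :
    factMap m f = factorialFunctional (Fin m) ℂ f := by
  rw [factorialFunctional, Module.Basis.constr_apply]
  rfl

theorem stmt_10 (m : ℕ) (hm : 1 ≤ m) (μ : Fin m → ℂ)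
    (f : MvPolynomial (Fin m) ℂ)
    (hf : f = (∏ i : Fin m, X i) * (∑ i : Fin m, C (μ i) * X i)) :
    (f ≠ 0 → ∃ k : ℕ, 1 ≤ k ∧ k ≤ f.support.card ∧ factMap m (f ^ k) ≠ 0) ∧
    ((∀ k : ℕ, 1 ≤ k → factMap m (f ^ k) = 0) → f = 0) := by
  simpa only [factMap_eq_factorialFunctional] using stmt_10_general μ f hf
end

section
/- For each n ∈ ℕ let P_n(X) = ∑_{0 ≤ k ≤ ⌊n/2⌋} ((2n−k)! / ((n−2k)!·k!)) X^k ∈ ℂ[X]. Then for every n ∈ ℕ, the polynomials P_n(X) and P_{n+1}(X) have no common zero in ℂ. -/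
open Polynomial

/-- `P n = ∑_{0 ≤ k ≤ ⌊n/2⌋} ((2n−k)! / ((n−2k)!·k!)) Xᵏ ∈ ℂ[X]`. -/
noncomputable def P (n : ℕ) : Polynomial ℂ :=
  ∑ k ∈ Finset.range (n / 2 + 1),
    C (((2 * n - k).factorial : ℂ) /
        (((n - 2 * k).factorial : ℂ) * (k.factorial : ℂ))) * X ^ k

/-!
The polynomials satisfy the three-term recurrence
`(1 + 4X) P (n+2) = (2n+3) (2 + 9X) P (n+1) + 3 (3n+2) (3n+4) X² P n`.
At a point `x ≠ 0` the coefficient of `P n` does not vanish, so a common zero of two consecutive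
polynomials would descend to a zero of `P 0 = 1`; and `P n` does not vanish at `0`.

The recurrence is checked coefficientwise. Writing `1 / (m - j)! = m (m - 1) ⋯ (m - j + 1) / m!`,
which holds also for `m < j` if `1 / (m - j)!` is read as `0`, makes all five coefficients
polynomial multiples of one quotient of factorials, whether or not some of them vanish.
-/

lemma not_consecutive_zeros_of_three_term_recurrence {R : Type*} [NonUnitalNonAssocSemiring R]
    [NoZeroDivisors R] {u a b c : ℕ → R} (hu : u 0 ≠ 0) (hc : ∀ n, c n ≠ 0)
    (hrec : ∀ n, a n * u (n + 2) = b n * u (n + 1) + c n * u n) (n : ℕ) :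
    ¬ (u n = 0 ∧ u (n + 1) = 0) := by
  induction n with
  | zero => exact fun h ↦ hu h.1
  | succ n ih =>
    rintro ⟨h₁, h₂⟩
    have hmul : c n * u n = 0 := by simpa [h₁, h₂] using (hrec n).symm
    exact ih ⟨(mul_eq_zero.mp hmul).resolve_left (hc n), h₁⟩

lemma cast_descFactorial_add_div_factorial {K : Type*} [DivisionSemiring K] [CharZero K]
    (m j : ℕ) : ((m + j).descFactorial j : K) / (m + j).factorial = (m.factorial : K)⁻¹ := by
  have hfact : m.factorial * (m + j).descFactorial j = (m + j).factorial := by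
    simpa using Nat.factorial_mul_descFactorial (Nat.le_add_left j m)
  have hne : ((m + j).descFactorial j : K) ≠ 0 := by
    simp [Nat.descFactorial_eq_zero_iff_lt]
  rw [← hfact, Nat.cast_mul, div_mul_cancel_right₀ hne]

lemma coeff_P (n k : ℕ) : (P n).coeff k =
    if 2 * k ≤ n then ((2 * n - k).factorial : ℂ) / ((n - 2 * k).factorial * k.factorial)
    else 0 := by
  have hmem : k < n / 2 + 1 ↔ 2 * k ≤ n := by omega
  simp [P, coeff_X_pow, hmem]

lemma eval_zero_P_ne_zero (n : ℕ) : (P n).eval 0 ≠ 0 := by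
  simp [← coeff_zero_eq_eval_zero, coeff_P, Nat.factorial_ne_zero]

lemma coeff_P_mul_X_pow_eq_zero {n i k : ℕ} (h : n + 2 * i < 2 * k) :
    (P n * X ^ i).coeff k = 0 := by
  rw [coeff_mul_X_pow', coeff_P, if_pos (by omega), if_neg (by omega)]

lemma coeff_P_mul_X_pow {n i j k a b : ℕ} (ha : a + 2 * k = n + 2 * i + j)
    (hb : b + k = 2 * n + i) :
    (P n * X ^ i).coeff k =
      (k.descFactorial i : ℂ) * a.descFactorial j *
        (b.factorial / (a.factorial * k.factorial)) := by
  rcases lt_or_ge k i with hki | hik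
  · simp [coeff_mul_X_pow', hki.not_ge, Nat.descFactorial_of_lt hki]
  rcases lt_or_ge a j with haj | hja
  · rw [coeff_P_mul_X_pow_eq_zero (by omega), Nat.descFactorial_of_lt haj]
    simp
  obtain ⟨l, rfl⟩ := Nat.exists_eq_add_of_le' hik
  obtain ⟨m, rfl⟩ := Nat.exists_eq_add_of_le' hja
  obtain rfl : n = m + 2 * l := by omega
  obtain rfl : b = 2 * (m + 2 * l) - l := by omega
  calc (P (m + 2 * l) * X ^ i).coeff (l + i)
      = ((2 * (m + 2 * l) - l).factorial : ℂ) * (l.factorial : ℂ)⁻¹ * (m.factorial : ℂ)⁻¹ := by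
        rw [coeff_mul_X_pow, coeff_P, if_pos (by omega), Nat.add_sub_cancel]
        ring
    _ = _ := by
        rw [← cast_descFactorial_add_div_factorial l i, ← cast_descFactorial_add_div_factorial m j]
        ring

lemma coeff_P_recurrence (n k : ℕ) :
    (P (n + 2) * X ^ 0).coeff k + 4 * (P (n + 2) * X ^ 1).coeff k =
      (2 * n + 3 : ℂ) * (2 * (P (n + 1) * X ^ 0).coeff k + 9 * (P (n + 1) * X ^ 1).coeff k) +
        (3 * (3 * n + 2) * (3 * n + 4) : ℂ) * (P n * X ^ 2).coeff k := by
  rcases lt_or_ge (n + 4) (2 * k) with hlt | hle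
  · rw [coeff_P_mul_X_pow_eq_zero (by omega), coeff_P_mul_X_pow_eq_zero (by omega),
      coeff_P_mul_X_pow_eq_zero (by omega), coeff_P_mul_X_pow_eq_zero (by omega),
      coeff_P_mul_X_pow_eq_zero (by omega)]
    ring
  obtain ⟨a, ha⟩ : ∃ a, a + 2 * k = n + 4 := ⟨n + 4 - 2 * k, by omega⟩
  obtain ⟨b, hb⟩ : ∃ b, b + k = 2 * n + 2 := ⟨2 * n + 2 - k, by omega⟩
  have hpoly : (a * (a - 1) * (b + 2) * (b + 1) + 4 * (k * (b + 3) * (b + 2) * (b + 1)) : ℂ) =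
      (2 * n + 3) * (2 * (a * (a - 1) * (a - 2)) + 9 * (k * a * (b + 1))) +
        3 * (3 * n + 2) * (3 * n + 4) * (k * (k - 1)) := by
    have haC : (a : ℂ) = n + 4 - 2 * k := eq_sub_of_add_eq (mod_cast ha)
    have hbC : (b : ℂ) = 2 * n + 2 - k := eq_sub_of_add_eq (mod_cast hb)
    rw [haC, hbC]
    ring
  rw [coeff_P_mul_X_pow (n := n + 2) (i := 0) (j := 2) (a := a) (b := b + 2) (by omega) (by omega),
    coeff_P_mul_X_pow (n := n + 2) (i := 1) (j := 0) (a := a) (b := b + 3) (by omega) (by omega),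
    coeff_P_mul_X_pow (n := n + 1) (i := 0) (j := 3) (a := a) (b := b) (by omega) (by omega),
    coeff_P_mul_X_pow (n := n + 1) (i := 1) (j := 1) (a := a) (b := b + 1) (by omega) (by omega),
    coeff_P_mul_X_pow (n := n) (i := 2) (j := 0) (a := a) (b := b) (by omega) (by omega)]
  simp only [← descPochhammer_eval_eq_descFactorial ℂ, descPochhammer_succ_eval,
    descPochhammer_zero, eval_one, Nat.factorial_succ, Nat.cast_mul, Nat.cast_add]
  push_cast
  linear_combination (b.factorial / (a.factorial * k.factorial) : ℂ) * hpoly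

lemma P_recurrence (n : ℕ) :
    (1 + 4 * X) * P (n + 2) =
      C (2 * n + 3 : ℂ) * (2 + 9 * X) * P (n + 1) +
        C (3 * (3 * n + 2) * (3 * n + 4) : ℂ) * X ^ 2 * P n := by
  have hC : P (n + 2) * X ^ 0 + C 4 * (P (n + 2) * X ^ 1) =
      C (2 * n + 3 : ℂ) * (C 2 * (P (n + 1) * X ^ 0) + C 9 * (P (n + 1) * X ^ 1)) +
        C (3 * (3 * n + 2) * (3 * n + 4) : ℂ) * (P n * X ^ 2) := by
    ext k
    simpa only [coeff_add, coeff_C_mul] using coeff_P_recurrence n k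
  simp only [C_ofNat] at hC
  linear_combination hC

theorem stmt_14 (n : ℕ) : ¬ ∃ x : ℂ, (P n).eval x = 0 ∧ (P (n + 1)).eval x = 0 := by
  rintro ⟨x, hx⟩
  have hx0 : x ≠ 0 := by
    rintro rfl
    exact eval_zero_P_ne_zero n hx.1
  have hP0 : (P 0).eval x ≠ 0 := by simp [P]
  have hcoeff (m : ℕ) : (3 * (3 * m + 2) * (3 * m + 4) : ℂ) * x ^ 2 ≠ 0 :=
    mul_ne_zero (mod_cast (by positivity : 3 * (3 * m + 2) * (3 * m + 4) ≠ 0)) (pow_ne_zero 2 hx0)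
  have hrec (m : ℕ) : (1 + 4 * x) * (P (m + 2)).eval x =
      (2 * m + 3) * (2 + 9 * x) * (P (m + 1)).eval x +
        3 * (3 * m + 2) * (3 * m + 4) * x ^ 2 * (P m).eval x := by
    simpa using congrArg (eval x) (P_recurrence m)
  exact not_consecutive_zeros_of_three_term_recurrence (u := fun m ↦ (P m).eval x)
    hP0 hcoeff hrec n hx
end
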